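/- arXiv:1407.2970 — 2 statements merged into one kernel-verified Lean document; each statement's English description precedes it below -/
import Mathlib

section
/- Let q be a prime power, r ≥ 1, s ≥ 2, and n ≥ 0, and let Q_{r,n,s} denote the number of s-powerful monic polynomials in F_q[x_1,…,x_r] of total degree n. Then Q_{r,n,s} = − ∑_{1 ≤ i ≤ n/s} ∑_{j ∈ M_i} (−1)^{|j|} · P_{r,j_1}·P_{r,j_2}·⋯·P_{r,j_{|j|}} · P_{r,n−is}. -/
open MvPolynomial

/-- The key of a monomial in the degree-lexicographic order: first total degree, then
lexicographic comparison of exponent vectors. -/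
noncomputable def degLexKey {r : ℕ} (m : Fin r →₀ ℕ) : Lex (ℕ × Lex (Fin r →₀ ℕ)) :=
  toLex (m.sum fun _ e => e, toLex m)

/-- A multivariate polynomial is monic if the coefficient of its deg-lex leading monomial is 1. -/
def MvMonic {r : ℕ} {F : Type*} [CommSemiring F] (f : MvPolynomial (Fin r) F) : Prop :=
  ∃ m ∈ f.support, (∀ m' ∈ f.support, degLexKey m' ≤ degLexKey m) ∧ f.coeff m = 1

/-- The number of `s`-powerful monic `r`-variate polynomials of total degree `n` over `F`:
those divisible by the `s`-th power of some nonconstant polynomial. -/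
noncomputable def Qcount (F : Type) [Field F] (r n s : ℕ) : ℕ :=
  Set.ncard {f : MvPolynomial (Fin r) F | f.totalDegree = n ∧ MvMonic f ∧
    ∃ g : MvPolynomial (Fin r) F, 0 < g.totalDegree ∧ g ^ s ∣ f}

noncomputable def Pval (q r n : ℕ) : ℚ :=
  (q : ℚ) ^ (Nat.choose (r + n) r - 1) *
    (1 - ((q : ℚ)⁻¹) ^ (Nat.choose (r + n - 1) (r - 1))) / (1 - (q : ℚ)⁻¹)

open MonomialOrder

section aux
variable {r : ℕ} {F : Type} [Field F]

lemma degLexKey_le_iff (a b : Fin r →₀ ℕ) :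
    degLexKey a ≤ degLexKey b ↔ (degLex (σ := Fin r)).toSyn a ≤ (degLex (σ := Fin r)).toSyn b := by
  rfl

lemma mvMonic_iff (f : MvPolynomial (Fin r) F) : MvMonic f ↔ (degLex (σ := Fin r)).Monic f := by
  constructor
  · rintro ⟨m, hm, h1, h2⟩
    have hf : f ≠ 0 := by rintro rfl; simp at hm
    have h3 := h1 _ ((degLex (σ := Fin r)).degree_mem_support hf)
    rw [degLexKey_le_iff] at h3
    have h4 := (degLex (σ := Fin r)).le_degree hm
    have h5 := (degLex (σ := Fin r)).toSyn.injective (le_antisymm h3 h4)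
    rw [Monic, leadingCoeff, h5, h2]
  · intro h
    refine ⟨_, (degLex (σ := Fin r)).degree_mem_support h.ne_zero, fun m' hm' => ?_, h⟩
    rw [degLexKey_le_iff]
    exact (degLex (σ := Fin r)).le_degree hm'

lemma monic_mul {f g : MvPolynomial (Fin r) F} (hf : MvMonic f) (hg : MvMonic g) :
    MvMonic (f * g) := by
  rw [mvMonic_iff] at *; exact hf.mul hg

lemma monic_ne_zero {f : MvPolynomial (Fin r) F} (hf : MvMonic f) : f ≠ 0 := by
  rw [mvMonic_iff] at hf; exact hf.ne_zero

lemma monic_pow {f : MvPolynomial (Fin r) F} (hf : MvMonic f) (s : ℕ) :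
    MvMonic (f ^ s) := by
  rw [mvMonic_iff] at *; exact hf.pow

lemma monic_of_mul {f g : MvPolynomial (Fin r) F} (hf : MvMonic f) (hg : MvMonic (f * g)) :
    MvMonic g := by
  rw [mvMonic_iff] at *
  rw [Monic, leadingCoeff_mul, hf.leadingCoeff_eq_one, one_mul] at hg
  exact hg

lemma exists_monic {f : MvPolynomial (Fin r) F} (hf : f ≠ 0) :
    ∃ c : Fˣ, ∃ g, MvMonic g ∧ f = C (c : F) * g := by
  have h : (degLex (σ := Fin r)).leadingCoeff f ≠ 0 := by
    simpa using hf
  refine ⟨Units.mk0 _ h, C ((degLex (σ := Fin r)).leadingCoeff f)⁻¹ * f, ?_, ?_⟩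
  · rw [mvMonic_iff, Monic, leadingCoeff_mul, leadingCoeff_C, inv_mul_cancel₀ h]
  · rw [← mul_assoc, ← C_mul, Units.val_mk0, mul_inv_cancel₀ h, C_1, one_mul]

lemma monic_C_mul_inj {f g : MvPolynomial (Fin r) F} (hf : MvMonic f) (hg : MvMonic g)
    {c d : F} (h : C c * f = C d * g) (hc : c ≠ 0) : c = d ∧ f = g := by
  rw [mvMonic_iff] at hf hg
  have h1 := congrArg (degLex (σ := Fin r)).leadingCoeff h
  rw [leadingCoeff_mul, leadingCoeff_mul, leadingCoeff_C, leadingCoeff_C,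
    hf.leadingCoeff_eq_one, hg.leadingCoeff_eq_one, mul_one, mul_one] at h1
  subst h1
  exact ⟨rfl, mul_left_cancel₀ (by simpa using hc) h⟩

lemma totalDegree_C_mul' {f : MvPolynomial (Fin r) F} {c : F} (hc : c ≠ 0) (hf : f ≠ 0) :
    (C c * f).totalDegree = f.totalDegree := by
  rw [totalDegree_mul_of_isDomain (by simpa using hc) hf, totalDegree_C, zero_add]

lemma totalDegree_pow' {f : MvPolynomial (Fin r) F} (hf : f ≠ 0) (s : ℕ) :
    (f ^ s).totalDegree = s * f.totalDegree := by
  induction s with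
  | zero => simp
  | succ s ih =>
    rw [pow_succ, totalDegree_mul_of_isDomain (pow_ne_zero _ hf) hf, ih]; ring

lemma isUnit_of_td {f : MvPolynomial (Fin r) F} (hf : f ≠ 0) (h : f.totalDegree = 0) :
    IsUnit f := by
  rw [totalDegree_eq_zero_iff_eq_C] at h
  rw [h] at hf ⊢
  have : f.coeff 0 ≠ 0 := by simpa using hf
  exact (isUnit_iff_ne_zero.mpr this).map C

/-- s-th power free -/
def SFree (s : ℕ) (f : MvPolynomial (Fin r) F) : Prop :=
  ∀ g : MvPolynomial (Fin r) F, g ^ s ∣ f → g.totalDegree = 0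

lemma sfree_iff (s : ℕ) (f : MvPolynomial (Fin r) F) :
    SFree s f ↔ ¬ ∃ g : MvPolynomial (Fin r) F, 0 < g.totalDegree ∧ g ^ s ∣ f := by
  simp only [SFree, not_exists, not_and]
  refine forall_congr' fun g => ⟨fun h h1 h2 => ?_, fun h h1 => ?_⟩
  · have := h h2; omega
  · by_contra h2; exact h (by omega) h1

lemma exists_decomp {s : ℕ} (hs : 2 ≤ s) (n : ℕ) : ∀ f : MvPolynomial (Fin r) F, MvMonic f →
    f.totalDegree = n → ∃ g h : MvPolynomial (Fin r) F, MvMonic g ∧ MvMonic h ∧ SFree s h ∧ g ^ s * h = f := by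
  induction n using Nat.strong_induction_on with
  | _ n ih =>
  intro f hf hn
  by_cases h : SFree s f
  · exact ⟨1, f, by rw [mvMonic_iff]; exact monic_one, hf, h, by simp⟩
  · rw [sfree_iff, not_not] at h
    obtain ⟨g, hg, k, hk⟩ := h
    have hf0 := monic_ne_zero hf
    have hg0 : g ≠ 0 := by rintro rfl; simp at hg
    obtain ⟨c, g', hg', rfl⟩ := exists_monic hg0
    rw [totalDegree_C_mul' c.ne_zero (monic_ne_zero hg')] at hg
    have e : f = g' ^ s * (C (c : F) ^ s * k) := by rw [hk]; ring
    have hk' := monic_of_mul (monic_pow hg' s) (e ▸ hf)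
    set k' := C (c : F) ^ s * k
    have hd : f.totalDegree = s * g'.totalDegree + k'.totalDegree := by
      rw [e, totalDegree_mul_of_isDomain (monic_ne_zero (monic_pow hg' s)) (monic_ne_zero hk'),
        totalDegree_pow' (monic_ne_zero hg')]
    have : 0 < s * g'.totalDegree := by positivity
    obtain ⟨a, b, ha, hb, hb', hab⟩ := ih k'.totalDegree (by omega) k' hk' rfl
    exact ⟨g' * a, b, monic_mul hg' ha, hb, hb', by rw [e, ← hab]; ring⟩

lemma decomp_unique {s : ℕ} {g h g' h' : MvPolynomial (Fin r) F}
    (hg : MvMonic g) (hg' : MvMonic g')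
    (f1 : SFree s h) (f2 : SFree s h') (e : g ^ s * h = g' ^ s * h') : g = g' ∧ h = h' := by
  have hgg : g = g' := by
    obtain ⟨a, b, c, hab, ha, hb⟩ :=
      UniqueFactorizationMonoid.exists_reduced_factors g (monic_ne_zero hg) g'
    have hg0 := monic_ne_zero hg
    have hg0' := monic_ne_zero hg'
    have hc0 : c ≠ 0 := by rintro rfl; simp at ha; exact hg0 ha.symm
    have ha0 : a ≠ 0 := by rintro rfl; simp at ha; exact hg0 ha.symm
    have hb0 : b ≠ 0 := by rintro rfl; simp at hb; exact hg0' hb.symm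
    have e2 : a ^ s * h = b ^ s * h' := by
      apply mul_left_cancel₀ (pow_ne_zero s hc0)
      rw [← mul_assoc, ← mul_assoc, ← mul_pow, ← mul_pow, ha, hb, e]
    have hab' : IsRelPrime (a ^ s) (b ^ s) := hab.pow
    have d1 : a ^ s ∣ h' := hab'.dvd_of_dvd_mul_left ⟨h, e2.symm⟩
    have d2 : b ^ s ∣ h := hab'.symm.dvd_of_dvd_mul_left ⟨h', e2⟩
    have a0 := f2 _ d1
    have b0 := f1 _ d2
    rw [totalDegree_eq_zero_iff_eq_C] at a0 b0
    have hca : a.coeff 0 ≠ 0 := by intro h; rw [h] at a0; simp at a0; exact ha0 a0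
    rw [a0] at ha
    rw [b0] at hb
    refine (monic_C_mul_inj hg hg' (c := b.coeff 0) (d := a.coeff 0) ?_ ?_).2
    · rw [← ha, ← hb]; ring
    · intro h; rw [h] at b0; simp at b0; exact hb0 b0
  subst hgg
  exact ⟨rfl, mul_left_cancel₀ (pow_ne_zero s (monic_ne_zero hg)) e⟩

end aux
section cnt
variable (r : ℕ) (F : Type) [Field F] [Fintype F]

lemma card_mons (n : ℕ) : Nat.card {m : Fin r →₀ ℕ | m.degree ≤ n} = (r + n).choose r := by
  classical
  have key : {m : Fin r →₀ ℕ | m.degree ≤ n} =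
      (((Finset.range (n+1)).biUnion fun k => Finset.finsuppAntidiag (Finset.univ : Finset (Fin r)) k :
        Finset (Fin r →₀ ℕ)) : Set (Fin r →₀ ℕ)) := by
    ext m
    simp [Finsupp.degree_eq_sum, Finset.mem_finsuppAntidiag]
  rw [key, Nat.card_coe_set_eq, Set.ncard_coe_finset, Finset.card_biUnion]
  · rw [Nat.choose_symm_add]
    simp_rw [Finset.card_finsuppAntidiag_nat_eq_choose]
    simp only [Finset.card_univ, Fintype.card_fin]
    induction n with
    | zero => simp
    | succ n ih =>
      have hk : {m : Fin r →₀ ℕ | m.degree ≤ n} =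
          (((Finset.range (n+1)).biUnion fun k =>
            Finset.finsuppAntidiag (Finset.univ : Finset (Fin r)) k :
            Finset (Fin r →₀ ℕ)) : Set (Fin r →₀ ℕ)) := by
        ext m
        simp [Finsupp.degree_eq_sum, Finset.mem_finsuppAntidiag]
      rw [Finset.sum_range_succ, ih hk, ← add_assoc, Nat.choose_succ_succ, Nat.add_sub_cancel]
  · intro i _ j _ hij
    rw [Function.onFun, Finset.disjoint_left]
    intro m h1 h2
    rw [Finset.mem_finsuppAntidiag] at h1 h2
    exact hij (h1.1.symm.trans h2.1)

lemma card_restrict (n : ℕ) :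
    Nat.card (restrictTotalDegree (Fin r) F n) = Fintype.card F ^ (r + n).choose r := by
  rw [Module.natCard_eq_pow_finrank (K := F), Nat.card_eq_fintype_card]
  congr 1
  rw [← card_mons]
  exact Module.finrank_eq_nat_card_basis (basisRestrictSupport F _)

lemma finite_le (n : ℕ) : {f : MvPolynomial (Fin r) F | f.totalDegree ≤ n}.Finite := by
  have h : Finite (restrictTotalDegree (Fin r) F n) := by
    apply Nat.finite_of_card_ne_zero
    rw [card_restrict]
    exact pow_ne_zero _ Fintype.card_ne_zero
  have h2 : ((restrictTotalDegree (Fin r) F n : Submodule _ _) : Set (MvPolynomial (Fin r) F)).Finite := h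
  refine h2.subset fun f hf => ?_
  exact (mem_restrictTotalDegree _ _ _).2 hf

lemma ncard_le (n : ℕ) : {f : MvPolynomial (Fin r) F | f.totalDegree ≤ n}.ncard =
    Fintype.card F ^ (r + n).choose r := by
  rw [← card_restrict, ← Nat.card_coe_set_eq]
  apply Nat.card_congr
  exact Equiv.subtypeEquivRight fun f => (mem_restrictTotalDegree _ _ _).symm

lemma ncard_eq (hr : 1 ≤ r) (n : ℕ) :
    {f : MvPolynomial (Fin r) F | f ≠ 0 ∧ f.totalDegree = n}.ncard +
      Fintype.card F ^ (r + n - 1).choose r = Fintype.card F ^ (r + n).choose r := by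
  rw [← ncard_le r F n]
  rcases n with _ | n
  · have h0 : (r + 0 - 1).choose r = 0 := Nat.choose_eq_zero_of_lt (by omega)
    rw [h0, pow_zero, ← Set.ncard_singleton (0 : MvPolynomial (Fin r) F), ← Set.ncard_union_eq
      (by simp) ((finite_le r F 0).subset fun f hf => hf.2.le) (by simp)]
    · congr 1
      ext f
      by_cases h : f = 0 <;> simp [h]
  · rw [show r + (n + 1) - 1 = r + n by omega, ← ncard_le r F n, ← Set.ncard_union_eq ?_
      ((finite_le r F (n+1)).subset fun f hf => hf.2.le) (finite_le r F n)]
    · congr 1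
      ext f
      simp only [Set.mem_union, Set.mem_ofPred_eq]
      constructor
      · rintro (h | h) <;> omega
      · intro h
        by_cases h1 : f.totalDegree ≤ n
        · exact Or.inr h1
        · left
          refine ⟨?_, by omega⟩
          rintro rfl
          simp at h1
    · rw [Set.disjoint_left]
      rintro f ⟨_, h⟩ h2
      simp only [Set.mem_ofPred_eq] at h2
      omega

lemma finite_monic (n : ℕ) :
    {f : MvPolynomial (Fin r) F | f.totalDegree = n ∧ MvMonic f}.Finite :=
  (finite_le r F n).subset fun _ hf => hf.1.le

/-- The finite set of monic polynomials of degree `n`. -/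
noncomputable def monFin (n : ℕ) : Finset (MvPolynomial (Fin r) F) :=
  (finite_monic r F n).toFinset

lemma mem_monFin {n : ℕ} {f : MvPolynomial (Fin r) F} :
    f ∈ monFin r F n ↔ f.totalDegree = n ∧ MvMonic f := by
  simp [monFin]

lemma card_units_mul (n : ℕ) :
    (Fintype.card F - 1) * (monFin r F n).card =
    {f : MvPolynomial (Fin r) F | f ≠ 0 ∧ f.totalDegree = n}.ncard := by
  classical
  have hfin : {f : MvPolynomial (Fin r) F | f ≠ 0 ∧ f.totalDegree = n}.Finite :=
    (finite_le r F n).subset fun _ hf => hf.2.le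
  rw [Set.ncard_eq_toFinset_card _ hfin, ← Fintype.card_units, ← Finset.card_univ,
    ← Finset.card_product]
  refine Finset.card_bij (fun p _ => C (p.1 : F) * p.2) ?_ ?_ ?_
  · rintro ⟨c, f⟩ h
    simp only [Finset.mem_product, mem_monFin] at h
    simp only [Set.Finite.mem_toFinset, Set.mem_ofPred_eq]
    have h0 := monic_ne_zero h.2.2
    exact ⟨mul_ne_zero (by simp) h0, by rw [totalDegree_C_mul' c.ne_zero h0, h.2.1]⟩
  · rintro ⟨c, f⟩ h ⟨d, g⟩ h' e
    simp only [Finset.mem_product, mem_monFin] at h h'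
    have := monic_C_mul_inj h.2.2 h'.2.2 e c.ne_zero
    rw [Prod.mk.injEq]
    exact ⟨Units.ext this.1, this.2⟩
  · intro f hf
    simp only [Set.Finite.mem_toFinset, Set.mem_ofPred_eq] at hf
    obtain ⟨c, g, hg, e⟩ := exists_monic hf.1
    refine ⟨(c, g), ?_, e.symm⟩
    simp only [Finset.mem_product, mem_monFin, Finset.mem_univ, true_and]
    refine ⟨?_, hg⟩
    rw [← hf.2, e, totalDegree_C_mul' c.ne_zero (monic_ne_zero hg)]

lemma card_monFin (hr : 1 ≤ r) (n : ℕ) :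
    ((monFin r F n).card : ℚ) = Pval (Fintype.card F) r n := by
  have h1 := ncard_eq r F hr n
  rw [← card_units_mul] at h1
  have hq : 1 < Fintype.card F := Fintype.one_lt_card
  set q := Fintype.card F
  have h2 : ((q : ℚ) - 1) * (monFin r F n).card + (q : ℚ) ^ (r + n - 1).choose r =
      (q : ℚ) ^ (r + n).choose r := by
    have := congrArg (Nat.cast : ℕ → ℚ) h1
    push_cast [Nat.cast_sub hq.le] at this
    exact this
  have hp : (r + n).choose r = (r + n - 1).choose (r - 1) + (r + n - 1).choose r := by
    obtain ⟨k, rfl⟩ : ∃ k, r = k + 1 := ⟨r - 1, by omega⟩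
    rw [show k + 1 + n = (k + n) + 1 by omega, Nat.choose_succ_succ]
    simp
  have hpos : 0 < (r + n).choose r := Nat.choose_pos (by omega)
  have hq0 : (q : ℚ) ≠ 0 := by positivity
  have hq1 : (q : ℚ) - 1 ≠ 0 := by
    have : (1 : ℚ) < q := by exact_mod_cast hq
    linarith
  have hq2 : 1 - (q : ℚ)⁻¹ ≠ 0 := by
    field_simp; exact div_ne_zero hq1 hq0
  rw [Pval, eq_div_iff hq2]
  apply mul_left_cancel₀ hq0
  have e1 : (q : ℚ) * (q ^ ((r + n).choose r - 1) *
      (1 - (q : ℚ)⁻¹ ^ (r + n - 1).choose (r - 1))) =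
      q ^ (r + n).choose r * (1 - (q : ℚ)⁻¹ ^ (r + n - 1).choose (r - 1)) := by
    rw [← mul_assoc, ← pow_succ', Nat.sub_add_cancel hpos]
  have e2 : (q : ℚ) * ((monFin r F n).card * (1 - (q : ℚ)⁻¹)) =
      ((q : ℚ) - 1) * (monFin r F n).card := by
    field_simp
  rw [e1, e2, mul_sub, mul_one, hp, pow_add, inv_pow, mul_right_comm,
    mul_inv_cancel₀ (pow_ne_zero _ hq0), one_mul, ← pow_add, ← hp]
  linarith

open Classical in
/-- The finite set of s-power-free monic polynomials of degree `n`. -/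
noncomputable def freeFin (s n : ℕ) : Finset (MvPolynomial (Fin r) F) :=
  (monFin r F n).filter (SFree s)

lemma mem_freeFin {s n : ℕ} {f : MvPolynomial (Fin r) F} :
    f ∈ freeFin r F s n ↔ (f.totalDegree = n ∧ MvMonic f) ∧ SFree s f := by
  classical
  rw [freeFin, Finset.mem_filter, mem_monFin]

lemma Qcount_add (s n : ℕ) :
    Qcount F r n s + (freeFin r F s n).card = (monFin r F n).card := by
  classical
  have h : {f : MvPolynomial (Fin r) F | f.totalDegree = n ∧ MvMonic f ∧
    ∃ g : MvPolynomial (Fin r) F, 0 < g.totalDegree ∧ g ^ s ∣ f} =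
      ((monFin r F n).filter (fun f => ¬ SFree s f) : Finset _) := by
    ext f
    simp only [Set.mem_ofPred_eq, Finset.coe_filter, mem_monFin, sfree_iff, not_not, and_assoc]
  rw [Qcount, h, Set.ncard_coe_finset, freeFin, add_comm, Finset.card_filter_add_card_filter_not]

lemma card_decomp {s : ℕ} (hs : 2 ≤ s) (n : ℕ) :
    (monFin r F n).card = ∑ i ∈ Finset.range (n / s + 1),
      (monFin r F i).card * (freeFin r F s (n - i * s)).card := by
  classical
  simp_rw [← Finset.card_product]
  rw [← Finset.card_sigma]
  symm
  refine Finset.card_bij (fun p _ => p.2.1 ^ s * p.2.2) ?_ ?_ ?_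
  · rintro ⟨i, g, h⟩ hm
    simp only [Finset.mem_sigma, Finset.mem_range, Finset.mem_product, mem_monFin,
      mem_freeFin] at hm
    obtain ⟨hi, ⟨h1, h2⟩, ⟨h3, h4⟩, h5⟩ := hm
    rw [mem_monFin]
    refine ⟨?_, monic_mul (monic_pow h2 s) h4⟩
    rw [totalDegree_mul_of_isDomain (monic_ne_zero (monic_pow h2 s)) (monic_ne_zero h4),
      totalDegree_pow' (monic_ne_zero h2), h1, h3]
    have : i * s ≤ n := (Nat.le_div_iff_mul_le (by omega)).1 (by omega)
    rw [mul_comm s i]; omega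
  · rintro ⟨i, g, h⟩ hm ⟨i', g', h'⟩ hm' e
    simp only [Finset.mem_sigma, Finset.mem_range, Finset.mem_product, mem_monFin,
      mem_freeFin] at hm hm'
    obtain ⟨rfl, rfl⟩ := decomp_unique hm.2.1.2 hm'.2.1.2 hm.2.2.2 hm'.2.2.2 e
    obtain rfl : i = i' := hm.2.1.1.symm.trans hm'.2.1.1
    rfl
  · intro f hf
    rw [mem_monFin] at hf
    obtain ⟨g, h, hg, hh, hh', e⟩ := exists_decomp hs n f hf.2 hf.1
    have hd : s * g.totalDegree + h.totalDegree = n := by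
      rw [← hf.1, ← e, totalDegree_mul_of_isDomain (monic_ne_zero (monic_pow hg s))
        (monic_ne_zero hh), totalDegree_pow' (monic_ne_zero hg)]
    have hd' : g.totalDegree * s ≤ n := by rw [mul_comm]; omega
    refine ⟨⟨g.totalDegree, g, h⟩, ?_, e⟩
    simp only [Finset.mem_sigma, Finset.mem_range, Finset.mem_product, mem_monFin,
      mem_freeFin]
    refine ⟨Nat.lt_succ_of_le ((Nat.le_div_iff_mul_le (by omega)).2 hd'), ⟨trivial, hg⟩,
      ⟨?_, hh⟩, hh'⟩
    rw [mul_comm g.totalDegree]; omega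

end cnt
/-- The coefficients of the inverse series. -/
noncomputable def invCoef (P : ℕ → ℚ) (n : ℕ) : ℚ :=
  ∑ c : Composition n, (-1 : ℚ) ^ c.length * (c.blocks.map P).prod

/-- Prepend a block. -/
def consComp (n : ℕ) (k : Fin (n+1)) (c : Composition (n - k)) : Composition (n + 1) where
  blocks := (k + 1) :: c.blocks
  blocks_pos := by
    intro i hi
    rcases List.mem_cons.1 hi with rfl | h
    · omega
    · exact c.blocks_pos h
  blocks_sum := by
    rw [List.sum_cons, c.blocks_sum]; omega

lemma consComp_bij (n : ℕ) : Function.Bijective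
    (fun p : (Σ k : Fin (n+1), Composition (n - k)) => consComp n p.1 p.2) := by
  constructor
  · rintro ⟨k, c⟩ ⟨k', c'⟩ h
    have h1 := congrArg Composition.blocks h
    simp only [consComp, List.cons.injEq, add_left_inj] at h1
    obtain rfl : k = k' := Fin.ext h1.1
    obtain rfl : c = c' := Composition.ext h1.2
    rfl
  · rintro ⟨bl, hp, hsum⟩
    cases bl with
    | nil => simp at hsum
    | cons b l =>
      have hb : 0 < b := hp (by simp)
      rw [List.sum_cons] at hsum
      refine ⟨⟨⟨b - 1, by omega⟩, ⟨l, fun h => hp (List.mem_cons_of_mem _ h), ?_⟩⟩, ?_⟩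
      · simp only; omega
      · apply Composition.ext
        simp only [consComp, List.cons.injEq, and_true]
        omega

lemma invCoef_zero (P : ℕ → ℚ) : invCoef P 0 = 1 := by
  rw [invCoef, Fintype.sum_eq_single (Composition.ones 0)]
  · simp
  · intro c hc
    refine absurd ?_ hc
    apply Composition.ext
    have h := c.blocks_sum
    rcases hb : c.blocks with _ | ⟨b, l⟩
    · rfl
    · rw [hb] at h
      have : 0 < b := c.blocks_pos (by rw [hb]; simp)
      rw [List.sum_cons] at h
      omega

lemma invCoef_succ (P : ℕ → ℚ) (n : ℕ) :
    invCoef P (n+1) = - ∑ k ∈ Finset.range (n+1), P (k+1) * invCoef P (n - k) := by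
  rw [invCoef, ← (consComp_bij n).sum_comp, Fintype.sum_sigma,
    ← Fin.sum_univ_eq_sum_range (fun k => P (k+1) * invCoef P (n - k)), ← Finset.sum_neg_distrib]
  refine Finset.sum_congr rfl fun k _ => ?_
  rw [invCoef, Finset.mul_sum, ← Finset.sum_neg_distrib]
  refine Finset.sum_congr rfl fun c _ => ?_
  have : (consComp n k c).length = c.length + 1 := rfl
  rw [this]
  simp only [consComp, List.map_cons, List.prod_cons]
  ring

lemma conv_inv (P : ℕ → ℚ) (hP : P 0 = 1) (n : ℕ) :
    ∑ p ∈ Finset.HasAntidiagonal.antidiagonal n, invCoef P p.1 * P p.2 = if n = 0 then 1 else 0 := by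
  rcases n with _ | n
  · simp [invCoef_zero, hP]
  · rw [Finset.Nat.sum_antidiagonal_succ', invCoef_succ, ← Finset.Nat.sum_antidiagonal_swap]
    simp only [hP, Prod.fst_swap, Prod.snd_swap]
    rw [Finset.Nat.sum_antidiagonal_eq_sum_range_succ (fun i j => invCoef P j * P (i + 1))]
    simp [mul_comm]

/-- Inversion. -/
lemma inversion (P S : ℕ → ℚ) (hP : P 0 = 1) (s : ℕ) (hs : 0 < s)
    (h : ∀ n, P n = ∑ i ∈ Finset.range (n / s + 1), P i * S (n - i * s)) (n : ℕ) :
    S n = ∑ i ∈ Finset.range (n / s + 1), invCoef P i * P (n - i * s) := by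
  have h1 : ∀ i ∈ Finset.range (n / s + 1), invCoef P i * P (n - i * s) =
      ∑ j ∈ Finset.range (n / s - i + 1), invCoef P i * (P j * S (n - (i + j) * s)) := by
    intro i hi
    rw [h (n - i * s), Finset.mul_sum, mul_comm i s, Nat.sub_mul_div]
    refine Finset.sum_congr rfl fun j _ => ?_
    rw [Nat.sub_sub, add_mul, mul_comm s i]
  rw [Finset.sum_congr rfl h1]
  set N := n / s
  have h2 : ∑ i ∈ Finset.range (N + 1), ∑ j ∈ Finset.range (N - i + 1),
      invCoef P i * (P j * S (n - (i + j) * s)) =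
      ∑ m ∈ Finset.range (N + 1), ∑ p ∈ Finset.HasAntidiagonal.antidiagonal m,
        invCoef P p.1 * (P p.2 * S (n - (p.1 + p.2) * s)) := by
    rw [Finset.sum_sigma', Finset.sum_sigma']
    refine Finset.sum_bij' (fun a _ => ⟨a.1 + a.2, (a.1, a.2)⟩) (fun b _ => ⟨b.2.1, b.2.2⟩)
      ?_ ?_ ?_ ?_ ?_
    · rintro ⟨i, j⟩ h; simp at h ⊢; omega
    · rintro ⟨m, i, j⟩ h; simp at h ⊢; omega
    · rintro ⟨i, j⟩ h; rfl
    · rintro ⟨m, i, j⟩ h; simp at h ⊢; omega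
    · rintro ⟨i, j⟩ h; rfl
  rw [h2]
  have h3 : ∀ m ∈ Finset.range (N + 1), ∑ p ∈ Finset.HasAntidiagonal.antidiagonal m,
        invCoef P p.1 * (P p.2 * S (n - (p.1 + p.2) * s)) =
        (if m = 0 then 1 else 0) * S (n - m * s) := by
    intro m _
    rw [← conv_inv P hP m, Finset.sum_mul]
    refine Finset.sum_congr rfl fun p hp => ?_
    rw [Finset.HasAntidiagonal.mem_antidiagonal.1 hp, mul_assoc]
  rw [Finset.sum_congr rfl h3, Finset.sum_range_succ']
  simp

theorem stmt3 (q : ℕ) (F : Type) [Field F] [Fintype F] (hq : Fintype.card F = q)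
    (r s n : ℕ) (hr : 1 ≤ r) (hs : 2 ≤ s) :
    (Qcount F r n s : ℚ) =
      - ∑ i ∈ Finset.Icc 1 (n / s), ∑ c : Composition i,
          (-1 : ℚ) ^ c.length * (c.blocks.map fun j => Pval q r j).prod *
            Pval q r (n - i * s) := by

  subst hq
  have hq1 : 1 < Fintype.card F := Fintype.one_lt_card
  have hP0 : Pval (Fintype.card F) r 0 = 1 := by
    have h : (1 : ℚ) < Fintype.card F := by exact_mod_cast hq1
    have h2 : 1 - (Fintype.card F : ℚ)⁻¹ ≠ 0 := by
      have := inv_lt_one_of_one_lt₀ h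
      linarith
    simp [Pval, h2]
  have hinv := inversion (fun n => Pval (Fintype.card F) r n)
    (fun n => ((freeFin r F s n).card : ℚ)) hP0 s (by omega) (fun m => by
      simp only [← card_monFin r F hr]
      rw [card_decomp r F hs m]
      push_cast
      rfl) n
  have hQ := congrArg (Nat.cast : ℕ → ℚ) (Qcount_add r F s n)
  push_cast at hQ
  rw [card_monFin r F hr] at hQ
  rw [Finset.sum_range_succ', invCoef_zero] at hinv
  have e : ∑ i ∈ Finset.Icc 1 (n / s), ∑ c : Composition i,
          (-1 : ℚ) ^ c.length * (c.blocks.map fun j => Pval (Fintype.card F) r j).prod *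
            Pval (Fintype.card F) r (n - i * s) =
      ∑ i ∈ Finset.range (n / s), invCoef (fun n => Pval (Fintype.card F) r n) (i + 1) *
        Pval (Fintype.card F) r (n - (i + 1) * s) := by
    rw [Finset.range_eq_Ico, Finset.sum_Ico_add' (fun i =>
      invCoef (fun n => Pval (Fintype.card F) r n) i * Pval (Fintype.card F) r (n - i * s)) 0 (n / s) 1]
    refine Finset.sum_congr (by ext; simp [Finset.mem_Icc, Finset.mem_Ico, Nat.lt_succ_iff]) fun i _ => ?_
    rw [invCoef, Finset.sum_mul]
  rw [e]
  simp only [zero_mul, Nat.sub_zero, one_mul] at hinv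
  linarith
end

section
/- Let q be a prime power and r, n ≥ 1. Let E_{r,n}(F_q) denote the number of relatively irreducible monic polynomials in F_q[x_1,…,x_r] of total degree n, and for a prime power Q let I_{r,m}(F_Q) denote the number of irreducible monic polynomials in F_Q[x_1,…,x_r] of total degree m. Then E_{r,n}(F_q) = − ∑_{k | n, k > 1} (1/k) · ∑_{s | k} μ(s) · I_{r,n/k}(F_{q^s}), where μ is the number-theoretic Möbius function. -/
open MvPolynomial

noncomputable def Icount (F : Type) [Field F] (r n : ℕ) : ℕ :=
  Set.ncard {f : MvPolynomial (Fin r) F | f.totalDegree = n ∧ MvMonic f ∧ Irreducible f}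

/-- A polynomial over `F` is relatively irreducible if it is irreducible over `F` but not
absolutely irreducible, i.e. not irreducible over an algebraic closure of `F`. -/
noncomputable def Ecount (F : Type) [Field F] (r n : ℕ) : ℕ :=
  Set.ncard {f : MvPolynomial (Fin r) F | f.totalDegree = n ∧ MvMonic f ∧ Irreducible f ∧
    ¬ Irreducible (MvPolynomial.map (algebraMap F (AlgebraicClosure F)) f)}


namespace RelIrr

open Function

section Monic

variable {r : ℕ} {F : Type*} [Field F]

lemma degLexKey_le_iff {a b : Fin r →₀ ℕ} :
    degLexKey a ≤ degLexKey b ↔ MonomialOrder.degLex.toSyn a ≤ MonomialOrder.degLex.toSyn b := by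
  rw [MonomialOrder.degLex_le_iff, Finsupp.DegLex.le_iff, degLexKey, degLexKey, Prod.Lex.le_iff]
  rfl

lemma mvMonic_iff {f : MvPolynomial (Fin r) F} :
    MvMonic f ↔ MonomialOrder.degLex.leadingCoeff f = 1 := by
  constructor
  · rintro ⟨m, hm, hmax, hc⟩
    have h0 : f ≠ 0 := by rintro rfl; simp at hm
    have h1 := hmax _ (MonomialOrder.degLex.degree_mem_support h0)
    rw [degLexKey_le_iff] at h1
    have h2 := MonomialOrder.degLex.le_degree hm
    have h3 : m = MonomialOrder.degLex.degree f :=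
      MonomialOrder.degLex.toSyn.injective (le_antisymm h2 h1)
    rw [MonomialOrder.leadingCoeff, ← h3, hc]
  · intro h
    have h0 : f ≠ 0 := by rintro rfl; simp at h
    exact ⟨_, MonomialOrder.degLex.degree_mem_support h0,
      fun m' hm' => degLexKey_le_iff.2 (MonomialOrder.degLex.le_degree hm'), h⟩

lemma MvMonic.ne_zero {f : MvPolynomial (Fin r) F} (h : MvMonic f) : f ≠ 0 := by
  rintro rfl; obtain ⟨m, hm, _⟩ := h; simp at hm

lemma lc_mul (f g : MvPolynomial (Fin r) F) :
    MonomialOrder.degLex.leadingCoeff (f * g) =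
      MonomialOrder.degLex.leadingCoeff f * MonomialOrder.degLex.leadingCoeff g := by
  rw [MonomialOrder.leadingCoeff_mul]

lemma MvMonic.mul {f g : MvPolynomial (Fin r) F} (hf : MvMonic f) (hg : MvMonic g) :
    MvMonic (f * g) := by
  rw [mvMonic_iff] at *
  rw [lc_mul, hf, hg, one_mul]

lemma mvMonic_one : MvMonic (1 : MvPolynomial (Fin r) F) := by
  rw [mvMonic_iff, ← C_1, MonomialOrder.leadingCoeff_C]

lemma mvMonic_prod {ι : Type*} (s : Finset ι) (f : ι → MvPolynomial (Fin r) F)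
    (h : ∀ i ∈ s, MvMonic (f i)) : MvMonic (∏ i ∈ s, f i) :=
  Finset.prod_induction _ MvMonic (fun _ _ => MvMonic.mul) mvMonic_one h

lemma exists_monic_assoc {f : MvPolynomial (Fin r) F} (h : f ≠ 0) :
    ∃ g, MvMonic g ∧ Associated f g := by
  have h1 : MonomialOrder.degLex.leadingCoeff f ≠ 0 :=
    MonomialOrder.degLex.leadingCoeff_ne_zero_iff.2 h
  refine ⟨f * C (MonomialOrder.degLex.leadingCoeff f)⁻¹, ?_, ?_⟩
  · rw [mvMonic_iff, lc_mul, MonomialOrder.leadingCoeff_C, mul_inv_cancel₀ h1]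
  · exact (associated_mul_unit_right _ _ ((isUnit_iff_ne_zero.2 (inv_ne_zero h1)).map C))

lemma eq_of_assoc {f g : MvPolynomial (Fin r) F} (hf : MvMonic f) (hg : MvMonic g)
    (h : Associated f g) : f = g := by
  obtain ⟨u, rfl⟩ := h
  obtain ⟨c, _, hc⟩ := isUnit_iff_eq_C_of_isReduced.1 u.isUnit
  rw [mvMonic_iff] at *
  rw [lc_mul, hf, hc, MonomialOrder.leadingCoeff_C, one_mul] at hg
  rw [hc, hg, C_1, mul_one]

lemma mvMonic_map {Ω : Type*} [Field Ω] (ι : F →+* Ω) {f : MvPolynomial (Fin r) F} :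
    MvMonic (map ι f) ↔ MvMonic f := by
  unfold MvMonic
  simp only [support_map_of_injective f ι.injective, coeff_map, map_eq_one_iff ι ι.injective]

lemma totalDegree_map' {Ω : Type*} [Field Ω] (ι : F →+* Ω) (f : MvPolynomial (Fin r) F) :
    (map ι f).totalDegree = f.totalDegree := by
  unfold totalDegree
  rw [support_map_of_injective f ι.injective]

lemma totalDegree_prod_range (k d : ℕ) (f : ℕ → MvPolynomial (Fin r) F)
    (h0 : ∀ i, f i ≠ 0) (h : ∀ i, (f i).totalDegree = d) :
    (∏ i ∈ Finset.range k, f i).totalDegree = d * k := by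
  induction k with
  | zero => simp
  | succ k ih =>
    rw [Finset.prod_range_succ, totalDegree_mul_of_isDomain
      (Finset.prod_ne_zero_iff.2 fun i _ => h0 i) (h0 k), ih, h, mul_add, mul_one]

lemma finite_deg [Finite F] (m : ℕ) : {f : MvPolynomial (Fin r) F | f.totalDegree = m}.Finite := by
  have : Finite (restrictTotalDegree (Fin r) F m) := Module.finite_of_finite F
  refine Set.Finite.subset (Set.toFinite (restrictTotalDegree (Fin r) F m : Set _)) ?_
  intro f hf
  exact (mem_restrictTotalDegree _ _ _).2 (le_of_eq hf)

end Monic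

section Norm

variable {r : ℕ} {F Ω : Type*} [Field F] [Field Ω]

/-- monic irreducible polynomials -/
def P (g : MvPolynomial (Fin r) Ω) : Prop := MvMonic g ∧ Irreducible g

lemma P.map_equiv (σ : Ω ≃+* Ω) {g : MvPolynomial (Fin r) Ω} (h : P g) :
    P (map (σ : Ω →+* Ω) g) := by
  refine ⟨(mvMonic_map _).2 h.1, ?_⟩
  exact (MulEquiv.irreducible_iff (mapEquiv (Fin r) σ)).2 h.2

lemma P.iter (σ : Ω ≃+* Ω) {g : MvPolynomial (Fin r) Ω} (h : P g) (i : ℕ) :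
    P ((map (σ : Ω →+* Ω))^[i] g) := by
  induction i with
  | zero => exact h
  | succ i ih => rw [iterate_succ_apply']; exact ih.map_equiv σ

lemma degree_iter (σ : Ω ≃+* Ω) (g : MvPolynomial (Fin r) Ω) (i : ℕ) :
    ((map (σ : Ω →+* Ω))^[i] g).totalDegree = g.totalDegree := by
  induction i with
  | zero => rfl
  | succ i ih => rw [iterate_succ_apply', totalDegree_map', ih]

lemma P.eq_of_dvd {g h : MvPolynomial (Fin r) Ω} (hg : P g) (hh : P h) (hd : g ∣ h) : g = h :=
  eq_of_assoc hg.1 hh.1 (hg.2.associated_of_dvd hh.2 hd)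

/-- the norm of g -/
noncomputable def nm (σ : Ω ≃+* Ω) (g : MvPolynomial (Fin r) Ω) : MvPolynomial (Fin r) Ω :=
  ∏ i ∈ Finset.range (minimalPeriod (map (σ : Ω →+* Ω)) g), (map (σ : Ω →+* Ω))^[i] g

variable (ι : F →+* Ω) (σ : Ω ≃+* Ω) (hfix : ∀ x, σ x = x ↔ x ∈ Set.range ι)

include hfix

lemma map_fixed (f : MvPolynomial (Fin r) F) : map (σ : Ω →+* Ω) (map ι f) = map ι f := by
  ext m
  rw [coeff_map, coeff_map]
  exact (hfix _).2 ⟨_, rfl⟩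

lemma descend {h : MvPolynomial (Fin r) Ω} (hh : map (σ : Ω →+* Ω) h = h) :
    ∃ f : MvPolynomial (Fin r) F, map ι f = h := by
  have : h ∈ Set.range (MvPolynomial.map (σ := Fin r) ι) := by
    rw [mem_range_map_iff_coeffs_subset]
    intro c hc
    obtain ⟨m, hm, rfl⟩ := mem_coeffs_iff.1 hc
    rw [← hfix]
    have := congrArg (coeff m) hh
    rwa [coeff_map] at this
  exact this

lemma dvd_descend {f g : MvPolynomial (Fin r) F} (hf : f ≠ 0) (h : map ι f ∣ map ι g) : f ∣ g := by
  obtain ⟨c, hc⟩ := h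
  have hf' : map ι f ≠ 0 := (map_ne_zero_iff _ (map_injective ι ι.injective)).2 hf
  have h2 := congrArg (map (σ : Ω →+* Ω)) hc
  rw [map_mul, map_fixed ι σ hfix, map_fixed ι σ hfix, hc] at h2
  obtain ⟨c', rfl⟩ := descend ι σ hfix (mul_left_cancel₀ hf' h2).symm
  exact ⟨c', map_injective ι ι.injective (by rw [hc, map_mul])⟩

lemma iter_dvd {g : MvPolynomial (Fin r) Ω} {f : MvPolynomial (Fin r) F} (h : g ∣ map ι f) (i : ℕ) :
    (map (σ : Ω →+* Ω))^[i] g ∣ map ι f := by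
  induction i with
  | zero => exact h
  | succ i ih =>
    rw [iterate_succ_apply', ← map_fixed ι σ hfix f]
    exact map_dvd _ ih

lemma nm_dvd {g : MvPolynomial (Fin r) Ω} (hg : P g) {f : MvPolynomial (Fin r) F}
    (h : g ∣ map ι f) : nm σ g ∣ map ι f := by
  refine Finset.prod_dvd_of_isRelPrime ?_ (fun i _ => iter_dvd ι σ hfix h i)
  intro i hi j hj hij
  simp only [Finset.coe_range, Set.mem_Iio] at hi hj
  refine (Irreducible.isRelPrime_iff_not_dvd (hg.iter σ i).2).2 ?_
  intro hd
  exact hij ((iterate_eq_iterate_iff_of_lt_minimalPeriod hi hj).1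
    ((hg.iter σ i).eq_of_dvd (hg.iter σ j) hd))

omit hfix in
lemma nm_fixed (g : MvPolynomial (Fin r) Ω) : map (σ : Ω →+* Ω) (nm σ g) = nm σ g := by
  unfold nm
  rw [map_prod]
  simp only [← iterate_succ_apply']
  generalize hk : minimalPeriod (map (σ : Ω →+* Ω)) g = k
  have h1 := Finset.prod_range_succ (fun i => (map (σ : Ω →+* Ω))^[i] g) k
  rw [Finset.prod_range_succ'] at h1
  have h2 : (map (σ : Ω →+* Ω))^[k] g = g := by rw [← hk]; exact iterate_minimalPeriod
  rw [h2] at h1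
  by_cases hg : g = 0
  · subst hg
    have : ∀ i, (map (σ : Ω →+* Ω))^[i] (0 : MvPolynomial (Fin r) Ω) = 0 := fun i => by
      induction i with
      | zero => rfl
      | succ i ih => rw [iterate_succ_apply', ih, map_zero]
    simp [this]
  · exact mul_right_cancel₀ hg h1

variable (hper : ∀ g : MvPolynomial (Fin r) Ω, g ∈ periodicPts (map (σ : Ω →+* Ω)))

include hper

omit hfix in
lemma dvd_nm (g : MvPolynomial (Fin r) Ω) : g ∣ nm σ g :=
  Finset.dvd_prod_of_mem (fun i => (map (σ : Ω →+* Ω))^[i] g)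
    (Finset.mem_range.2 (minimalPeriod_pos_of_mem_periodicPts (hper g)))

lemma exists_norm {g : MvPolynomial (Fin r) Ω} (hg : P g) :
    ∃ f : MvPolynomial (Fin r) F, P f ∧ map ι f = nm σ g := by
  obtain ⟨f, hf⟩ := descend ι σ hfix (nm_fixed σ g)
  have hm : MvMonic f := by
    rw [← mvMonic_map ι, hf]
    exact mvMonic_prod _ _ (fun i _ => (hg.iter σ i).1)
  have hgf : g ∣ map ι f := hf ▸ dvd_nm σ hper g
  refine ⟨f, ⟨hm, ?_⟩, hf⟩
  have key : ∀ a b : MvPolynomial (Fin r) F, f = a * b → g ∣ map ι a → IsUnit b := by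
    intro a b hab ha
    have h1 := nm_dvd ι σ hfix hg ha
    rw [← hf] at h1
    have h2 := dvd_descend ι σ hfix (MvMonic.ne_zero hm) h1
    have ha0 : a ≠ 0 := by rintro rfl; exact MvMonic.ne_zero hm (by simpa using hab)
    obtain ⟨c, hc⟩ := h2
    have h3 : a * 1 = a * (b * c) := by rw [← mul_assoc, ← hab, mul_one]; exact hc
    exact IsUnit.of_mul_eq_one _ (mul_left_cancel₀ ha0 h3).symm
  refine irreducible_iff.2 ⟨?_, ?_⟩
  · intro hu
    exact hg.2.not_isUnit (isUnit_of_dvd_unit hgf (hu.map (map ι)))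
  · intro a b hab
    have h1 : g ∣ map ι a * map ι b := by rw [← map_mul, ← hab]; exact hgf
    rcases hg.2.prime.dvd_or_dvd h1 with h | h
    · exact Or.inr (key a b hab h)
    · exact Or.inl (key b a (by rw [hab, mul_comm]) h)

lemma map_eq_nm {g : MvPolynomial (Fin r) Ω} (hg : P g) {f : MvPolynomial (Fin r) F} (hf : P f)
    (h : g ∣ map ι f) : map ι f = nm σ g := by
  obtain ⟨f', hf', he⟩ := exists_norm ι σ hfix hper hg
  have h1 := nm_dvd ι σ hfix hg h
  rw [← he] at h1
  rw [← hf'.eq_of_dvd hf (dvd_descend ι σ hfix hf'.2.ne_zero h1), he]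

omit hper hfix in
lemma exists_factor {f : MvPolynomial (Fin r) F} (hf : P f) :
    ∃ g : MvPolynomial (Fin r) Ω, P g ∧ g ∣ map ι f := by
  have h0 : map ι f ≠ 0 := (map_ne_zero_iff _ (map_injective ι ι.injective)).2 hf.2.ne_zero
  have hu : ¬ IsUnit (map ι f) := by
    intro hu
    rw [isUnit_iff_totalDegree_of_isReduced, totalDegree_map'] at hu
    apply hf.2.not_isUnit
    rw [isUnit_iff_totalDegree_of_isReduced]
    refine ⟨?_, hu.2⟩
    have := hu.1
    rw [coeff_map] at this
    exact isUnit_iff_ne_zero.2 fun h => by simp [h] at this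
  obtain ⟨g, hg, hd⟩ := WfDvdMonoid.exists_irreducible_factor hu h0
  obtain ⟨g', hm, ha⟩ := exists_monic_assoc hg.ne_zero
  exact ⟨g', ⟨hm, ha.irreducible hg⟩, ha.symm.dvd.trans hd⟩

omit hper hfix in
lemma dvd_nm_iff {g g' : MvPolynomial (Fin r) Ω} (hg : P g) (hg' : P g') (h : g' ∣ nm σ g) :
    ∃ i < minimalPeriod (map (σ : Ω →+* Ω)) g, g' = (map (σ : Ω →+* Ω))^[i] g := by
  obtain ⟨i, hi, hd⟩ := (hg'.2.prime.dvd_finsetProd_iff _).1 h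
  exact ⟨i, Finset.mem_range.1 hi, hg'.eq_of_dvd (hg.iter σ i) hd⟩

omit hper hfix in
lemma degree_nm {g : MvPolynomial (Fin r) Ω} (hg : P g) :
    (nm σ g).totalDegree = g.totalDegree * minimalPeriod (map (σ : Ω →+* Ω)) g :=
  totalDegree_prod_range _ _ _ (fun i => (hg.iter σ i).2.ne_zero) (fun i => degree_iter σ g i)

lemma count [Finite F] (m : ℕ) :
    {g : MvPolynomial (Fin r) Ω | P g ∧
      g.totalDegree * minimalPeriod (map (σ : Ω →+* Ω)) g = m}.Finite ∧
    ∀ T : Finset (MvPolynomial (Fin r) Ω), (∀ g, g ∈ T ↔ P g ∧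
      g.totalDegree * minimalPeriod (map (σ : Ω →+* Ω)) g = m) →
      (({f : MvPolynomial (Fin r) F | f.totalDegree = m ∧ MvMonic f ∧ Irreducible f}.ncard : ℕ) : ℚ)
        = ∑ g ∈ T, 1 / (minimalPeriod (map (σ : Ω →+* Ω)) g : ℚ) := by
  classical
  have hfin : {f : MvPolynomial (Fin r) F | f.totalDegree = m ∧ MvMonic f ∧ Irreducible f}.Finite :=
    (finite_deg m).subset fun f hf => hf.1
  constructor
  · refine Set.Finite.subset (hfin.biUnion (t := fun f => {g | P g ∧ g ∣ map ι f}) ?_) ?_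
    · intro f hf
      obtain ⟨g, hg, hd⟩ := exists_factor ι (f := f) (Ω := Ω) hf.2
      refine Set.Finite.subset ((Finset.range (minimalPeriod (map (σ : Ω →+* Ω)) g)).image
        fun i => (map (σ : Ω →+* Ω))^[i] g).finite_toSet ?_
      rintro g' ⟨hg', hd'⟩
      rw [map_eq_nm ι σ hfix hper hg hf.2 hd] at hd'
      obtain ⟨i, hi, rfl⟩ := dvd_nm_iff σ hg hg' hd'
      exact Finset.mem_coe.2 (Finset.mem_image.2 ⟨i, Finset.mem_range.2 hi, rfl⟩)
    · rintro g ⟨hg, hgm⟩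
      obtain ⟨f, hf, he⟩ := exists_norm ι σ hfix hper hg
      refine Set.mem_biUnion (x := f) ⟨?_, hf⟩ ⟨hg, he ▸ dvd_nm σ hper g⟩
      rw [← totalDegree_map' ι, he, degree_nm σ hg, hgm]
  · intro T hT
    have hex : ∀ g, ∃ f : MvPolynomial (Fin r) F, P g → P f ∧ map ι f = nm σ g := by
      intro g
      by_cases hg : P g
      · obtain ⟨f, hf⟩ := exists_norm ι σ hfix hper hg
        exact ⟨f, fun _ => hf⟩
      · exact ⟨0, fun h => absurd h hg⟩
    choose N hN using hex
    rw [Set.ncard_eq_toFinset_card _ hfin]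
    have hmaps : ∀ g ∈ T, N g ∈ hfin.toFinset := by
      intro g hg
      obtain ⟨hg, hgm⟩ := (hT g).1 hg
      obtain ⟨hf, he⟩ := hN g hg
      rw [Set.Finite.mem_toFinset]
      refine ⟨?_, hf⟩
      rw [← totalDegree_map' ι, he, degree_nm σ hg, hgm]
    rw [← Finset.sum_fiberwise_of_maps_to hmaps, Finset.card_eq_sum_ones, Nat.cast_sum]
    refine Finset.sum_congr rfl fun f hf => ?_
    rw [Set.Finite.mem_toFinset] at hf
    obtain ⟨hfm, hf⟩ := hf
    obtain ⟨g, hg, hd⟩ := exists_factor ι (f := f) (Ω := Ω) hf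
    have hfe := map_eq_nm ι σ hfix hper hg hf hd
    have hpos := minimalPeriod_pos_of_mem_periodicPts (hper g)
    have himg : T.filter (fun g => N g = f) =
        (Finset.range (minimalPeriod (map (σ : Ω →+* Ω)) g)).image
        fun i => (map (σ : Ω →+* Ω))^[i] g := by
      ext g'
      rw [Finset.mem_filter, Finset.mem_image, hT]
      constructor
      · rintro ⟨⟨hg', -⟩, rfl⟩
        have hd' := dvd_nm σ hper g'
        rw [← (hN g' hg').2, hfe] at hd'
        obtain ⟨i, hi, rfl⟩ := dvd_nm_iff σ hg hg' hd'
        exact ⟨i, Finset.mem_range.2 hi, rfl⟩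
      · rintro ⟨i, hi, rfl⟩
        have hgi := hg.iter σ i
        have h1 := map_eq_nm ι σ hfix hper hgi hf (iter_dvd ι σ hfix hd i)
        refine ⟨⟨hgi, ?_⟩, ?_⟩
        · rw [← degree_nm σ hgi, ← h1, totalDegree_map', hfm]
        · apply map_injective ι ι.injective
          rw [(hN _ hgi).2, h1]
    rw [himg, Finset.sum_image]
    · rw [Finset.sum_congr rfl (g := fun _ => 1 / (minimalPeriod (map (σ : Ω →+* Ω)) g : ℚ))
        (fun i _ => by rw [minimalPeriod_apply_iterate (hper g)])]
      rw [Finset.sum_const, Finset.card_range, nsmul_eq_mul]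
      have : (minimalPeriod (map (σ : Ω →+* Ω)) g : ℚ) ≠ 0 := by exact_mod_cast hpos.ne'
      field_simp
      simp
    · intro i hi j hj hij
      simp only [Finset.coe_range, Set.mem_Iio] at hi hj
      exact (iterate_eq_iterate_iff_of_lt_minimalPeriod hi hj).1 hij

lemma count_abs (m : ℕ) :
    {f : MvPolynomial (Fin r) F | f.totalDegree = m ∧ MvMonic f ∧ Irreducible f ∧
      Irreducible (map ι f)}.ncard =
    {g : MvPolynomial (Fin r) Ω | P g ∧ g.totalDegree = m ∧
      minimalPeriod (map (σ : Ω →+* Ω)) g = 1}.ncard := by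
  rw [← Set.ncard_image_of_injective _ (map_injective (σ := Fin r) ι ι.injective)]
  congr 1
  ext g
  constructor
  · rintro ⟨f, ⟨h1, h2, h3, h4⟩, rfl⟩
    refine ⟨⟨(mvMonic_map ι).2 h2, h4⟩, by rw [totalDegree_map', h1], ?_⟩
    rw [minimalPeriod_eq_one_iff_isFixedPt]
    exact map_fixed ι σ hfix f
  · rintro ⟨hg, h1, h2⟩
    rw [minimalPeriod_eq_one_iff_isFixedPt] at h2
    obtain ⟨f, rfl⟩ := descend ι σ hfix h2
    have hm := (mvMonic_map ι).1 hg.1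
    refine ⟨f, ⟨by rw [← totalDegree_map' ι, h1], hm, ?_, hg.2⟩, rfl⟩
    obtain ⟨f', hf', he⟩ := exists_norm ι σ hfix hper hg
    have h3 : nm σ (map ι f) = map ι f := by
      rw [nm, minimalPeriod_eq_one_iff_isFixedPt.2 h2]
      simp
    rw [h3] at he
    rw [← map_injective ι ι.injective he]
    exact hf'.2

end Norm

end RelIrr

namespace RelIrr

open Function

lemma sum_moebius (N : ℕ) (hN : N ≠ 0) :
    ∑ s ∈ N.divisors, (ArithmeticFunction.moebius s : ℚ) = if N = 1 then 1 else 0 := by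
  have h := congrArg (fun f : ArithmeticFunction ℤ => f N)
    ArithmeticFunction.moebius_mul_coe_zeta
  simp only [ArithmeticFunction.coe_mul_zeta_apply, ArithmeticFunction.one_apply] at h
  exact_mod_cast congrArg (Int.cast : ℤ → ℚ) h

lemma arith (n d K : ℕ) (hn : n ≠ 0) (hK : K ≠ 0) :
    ∑ k ∈ n.divisors, (1 / (k : ℚ)) * ∑ s ∈ k.divisors, (ArithmeticFunction.moebius s : ℚ) *
      (if d * (K / K.gcd s) = n / k then 1 / ((K / K.gcd s : ℕ) : ℚ) else 0) =
    if d = n ∧ K = 1 then 1 else 0 := by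
  rcases Nat.eq_zero_or_pos d with rfl | hd
  · rw [if_neg (by omega)]
    refine Finset.sum_eq_zero fun k hk => ?_
    have hk' := Nat.dvd_of_mem_divisors hk
    have : 0 < n / k := Nat.div_pos (Nat.le_of_dvd (Nat.pos_of_ne_zero hn) hk')
      (Nat.pos_of_mem_divisors hk)
    simp [this.ne]
  have hpos : ∀ s, 0 < K / K.gcd s := fun s =>
    Nat.div_pos (Nat.le_of_dvd (Nat.pos_of_ne_zero hK) (Nat.gcd_dvd_left _ _))
      (Nat.gcd_pos_of_pos_left _ (Nat.pos_of_ne_zero hK))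
  have step1 : ∀ k ∈ n.divisors, (1 / (k : ℚ)) * ∑ s ∈ k.divisors,
      (ArithmeticFunction.moebius s : ℚ) *
      (if d * (K / K.gcd s) = n / k then 1 / ((K / K.gcd s : ℕ) : ℚ) else 0) =
      ∑ s ∈ n.divisors, if s ∣ k ∧ d * (K / K.gcd s) * k = n then
        (ArithmeticFunction.moebius s : ℚ) * (d / n) else 0 := by
    intro k hk
    have hkn := Nat.dvd_of_mem_divisors hk
    have hk0 := Nat.pos_of_mem_divisors hk
    rw [← Nat.divisors_filter_dvd_of_dvd hn hkn, Finset.sum_filter, Finset.mul_sum]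
    refine Finset.sum_congr rfl fun s _ => ?_
    by_cases hs : s ∣ k
    · simp only [hs, true_and, if_true]
      have : d * (K / K.gcd s) = n / k ↔ d * (K / K.gcd s) * k = n := by
        rw [eq_comm, Nat.div_eq_iff_eq_mul_left hk0 hkn, eq_comm]
      simp only [this]
      split_ifs with h
      · have h1 : (n : ℚ) = d * ((K / K.gcd s : ℕ) : ℚ) * k := by
          rw [← h]; push_cast; ring
        have h2 : ((K / K.gcd s : ℕ) : ℚ) ≠ 0 := by exact_mod_cast (hpos s).ne'
        have h3 : (k : ℚ) ≠ 0 := by exact_mod_cast hk0.ne'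
        have h4 : (d : ℚ) ≠ 0 := by exact_mod_cast hd.ne'
        rw [h1]
        generalize ((K / K.gcd s : ℕ) : ℚ) = w at *
        field_simp
      · simp
    · simp [hs]
  rw [Finset.sum_congr rfl step1, Finset.sum_comm]
  have step2 : ∀ s ∈ n.divisors, (∑ k ∈ n.divisors, if s ∣ k ∧ d * (K / K.gcd s) * k = n then
        (ArithmeticFunction.moebius s : ℚ) * (d / n) else 0) =
      if d * Nat.lcm s K ∣ n then (ArithmeticFunction.moebius s : ℚ) * (d / n) else 0 := by
    intro s _
    have hl : Nat.lcm s K = (K / K.gcd s) * s := by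
      rw [Nat.lcm_comm, Nat.lcm, Nat.div_mul_right_comm (Nat.gcd_dvd_left K s)]
    rw [hl, ← mul_assoc]
    have hP := hpos s
    generalize K / K.gcd s = w at *
    split_ifs with h
    · obtain ⟨c, hc⟩ := h
      rw [Finset.sum_eq_single (s * c)]
      · rw [if_pos ⟨dvd_mul_right _ _, by rw [hc]; ring⟩]
      · intro k _ hkne
        rw [if_neg]
        rintro ⟨_, h2⟩
        apply hkne
        have : d * w * k = d * w * (s * c) := by rw [h2, hc]; ring
        exact Nat.eq_of_mul_eq_mul_left (Nat.mul_pos hd hP) this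
      · intro hnm
        exfalso; apply hnm
        rw [Nat.mem_divisors]
        exact ⟨⟨d * w, by rw [hc]; ring⟩, hn⟩
    · refine Finset.sum_eq_zero fun k _ => ?_
      rw [if_neg]
      rintro ⟨⟨c, rfl⟩, h2⟩
      exact h ⟨c, by rw [← h2]; ring⟩
  rw [Finset.sum_congr rfl step2]
  by_cases hdn : d ∣ n
  · obtain ⟨N, rfl⟩ := hdn
    have hN : N ≠ 0 := by rintro rfl; simp at hn
    have hiff : ∀ s, d * Nat.lcm s K ∣ d * N ↔ s ∣ N ∧ K ∣ N := fun s => by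
      rw [Nat.mul_dvd_mul_iff_left hd, Nat.lcm_dvd_iff]
    simp only [hiff]
    have hd1 : d = d * N ↔ N = 1 := by
      constructor
      · intro h
        exact Nat.eq_of_mul_eq_mul_left hd (by omega)
      · rintro rfl; simp
    simp only [hd1]
    by_cases hKN : K ∣ N
    · simp only [hKN, and_true]
      rw [← Finset.sum_filter, Nat.divisors_filter_dvd_of_dvd hn (dvd_mul_left N d),
        ← Finset.sum_mul, sum_moebius N hN]
      by_cases h1 : N = 1
      · subst h1
        have : K = 1 := Nat.dvd_one.1 hKN
        have h4 : (d : ℚ) ≠ 0 := by exact_mod_cast hd.ne'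
        simp [this, h4]
      · simp [h1]
    · simp only [hKN, and_false, if_false, Finset.sum_const_zero]
      rw [if_neg]
      rintro ⟨_, rfl⟩
      exact hKN (one_dvd _)
  · rw [if_neg (by rintro ⟨rfl, _⟩; exact hdn dvd_rfl)]
    refine Finset.sum_eq_zero fun s _ => ?_
    rw [if_neg fun h => hdn (dvd_of_mul_right_dvd h)]

lemma fixed_iff {F Ω : Type*} [Field F] [Finite F] [Field Ω] (ι : F →+* Ω) (x : Ω) :
    x ^ Nat.card F = x ↔ x ∈ Set.range ι := by
  classical
  have := Fintype.ofFinite F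
  rw [Nat.card_eq_fintype_card]
  constructor
  · intro hx
    set q : Polynomial Ω := Polynomial.X ^ Fintype.card F - Polynomial.X with hq
    have hc : 1 < Fintype.card F := Fintype.one_lt_card
    have hq0 : q ≠ 0 := FiniteField.X_pow_card_sub_X_ne_zero Ω hc
    have hdeg : q.natDegree = Fintype.card F := FiniteField.X_pow_card_sub_X_natDegree_eq Ω hc
    have hsub : Finset.univ.image ι ⊆ q.roots.toFinset := by
      intro y hy
      obtain ⟨a, _, rfl⟩ := Finset.mem_image.1 hy
      rw [Multiset.mem_toFinset, Polynomial.mem_roots hq0]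
      simp [hq, ← map_pow, FiniteField.pow_card]
    have hcard : q.roots.toFinset.card ≤ (Finset.univ.image ι).card := by
      rw [Finset.card_image_of_injective _ ι.injective, Finset.card_univ]
      exact (Multiset.toFinset_card_le _).trans ((Polynomial.card_roots' q).trans hdeg.le)
    have hx' : x ∈ q.roots.toFinset := by
      rw [Multiset.mem_toFinset, Polynomial.mem_roots hq0]
      simp [hq, hx]
    rw [← Finset.eq_of_subset_of_card_le hsub hcard] at hx'
    obtain ⟨a, _, h⟩ := Finset.mem_image.1 hx'
    exact ⟨a, h⟩
  · rintro ⟨a, rfl⟩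
    rw [← map_pow, FiniteField.pow_card]

lemma exists_period {F Ω : Type*} [Field F] [Finite F] [Field Ω] [Algebra F Ω]
    [Algebra.IsAlgebraic F Ω] (x : Ω) : ∃ m, 0 < m ∧ x ^ (Nat.card F) ^ m = x := by
  have hx : IsIntegral F x := Algebra.IsIntegral.isIntegral x
  have hfd := IntermediateField.adjoin.finiteDimensional hx
  have hfin : Finite (IntermediateField.adjoin F {x}) := Module.finite_of_finite F
  refine ⟨Module.finrank F (IntermediateField.adjoin F {x}), Module.finrank_pos, ?_⟩
  rw [← Module.natCard_eq_pow_finrank]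
  exact (fixed_iff (algebraMap (IntermediateField.adjoin F {x}) Ω) x).2
    ⟨⟨x, IntermediateField.mem_adjoin_simple_self F x⟩, rfl⟩

lemma periodic_poly {r : ℕ} {Ω : Type*} [Field Ω] (σ : Ω →+* Ω)
    (h : ∀ x, x ∈ periodicPts σ) (g : MvPolynomial (Fin r) Ω) : g ∈ periodicPts (map σ) := by
  have hit : ∀ (i : ℕ) (m : Fin r →₀ ℕ), coeff m ((map σ)^[i] g) = σ^[i] (coeff m g) := by
    intro i m
    induction i with
    | zero => rfl
    | succ i ih => rw [iterate_succ_apply', coeff_map, ih, iterate_succ_apply']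
  refine mk_mem_periodicPts (n := ∏ m ∈ g.support, minimalPeriod σ (coeff m g))
    (Finset.prod_pos fun m _ => minimalPeriod_pos_of_mem_periodicPts (h _)) ?_
  refine MvPolynomial.ext _ _ fun m => ?_
  rw [hit]
  by_cases hm : m ∈ g.support
  · exact (isPeriodicPt_minimalPeriod σ (coeff m g)).trans_dvd
      (Finset.dvd_prod_of_mem (fun m => minimalPeriod σ (coeff m g)) hm)
  · rw [notMem_support_iff.1 hm, iterate_map_zero]

end RelIrr
theorem stmt6 (p e : ℕ) [Fact p.Prime] (he : 1 ≤ e) (r n : ℕ) (hr : 1 ≤ r) (hn : 1 ≤ n) :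
    (Ecount (GaloisField p e) r n : ℚ) =
      - ∑ k ∈ n.divisors.filter (fun k => 1 < k), (1 / (k : ℚ)) *
          ∑ s ∈ k.divisors, (ArithmeticFunction.moebius s : ℚ) *
            Icount (GaloisField p (e * s)) r (n / k) := by

  classical
  set F := GaloisField p e with hF
  let Ω := AlgebraicClosure F
  have he0 : e ≠ 0 := by omega
  have : CharP Ω p := charP_of_injective_algebraMap (algebraMap F Ω).injective p
  have hcard : Nat.card F = p ^ e := GaloisField.card p e he0
  have : Finite F := Nat.finite_of_card_ne_zero (by rw [hcard]; exact (pow_pos (Nat.Prime.pos Fact.out) _).ne')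
  have : ExpChar Ω p := ExpChar.prime Fact.out
  let σ : ℕ → (Ω ≃+* Ω) := fun s => iterateFrobeniusEquiv Ω p (e * s)
  have hσ : ∀ s x, σ s x = x ^ p ^ (e * s) := fun s x => rfl
  let φ : MvPolynomial (Fin r) Ω → MvPolynomial (Fin r) Ω := map (σ 1 : Ω →+* Ω)
  have hφ : ∀ s, (⇑(map (σ s : Ω →+* Ω)) : MvPolynomial (Fin r) Ω → _) = φ^[s] := by
    intro s
    induction s with
    | zero =>
      funext g
      refine MvPolynomial.ext _ _ fun m => ?_
      rw [coeff_map]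
      simp [σ]
    | succ s ih =>
      funext g
      rw [Function.iterate_succ_apply', ← ih]
      refine MvPolynomial.ext _ _ fun m => ?_
      simp only [φ, coeff_map, RingHom.coe_coe, hσ]
      rw [← pow_mul, ← pow_add, mul_add]
  have hperφ : ∀ g, g ∈ Function.periodicPts φ := by
    refine RelIrr.periodic_poly _ fun x => ?_
    obtain ⟨m, hm, hx⟩ := RelIrr.exists_period (F := F) x
    refine Function.mk_mem_periodicPts hm ?_
    have : ∀ i, (σ 1 : Ω →+* Ω)^[i] x = x ^ (p ^ e) ^ i := by
      intro i
      induction i with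
      | zero => simp
      | succ i ih =>
        rw [Function.iterate_succ_apply', ih]
        simp only [RingHom.coe_coe, hσ, mul_one]
        rw [← pow_mul, pow_succ]
    rw [Function.IsPeriodicPt, Function.IsFixedPt, this, ← hcard, hx]
  have hper : ∀ s, s ≠ 0 → ∀ g : MvPolynomial (Fin r) Ω,
      g ∈ Function.periodicPts (map (σ s : Ω →+* Ω)) := by
    intro s hs g
    rw [hφ]
    obtain ⟨m, hm, h⟩ := hperφ g
    exact Function.mk_mem_periodicPts hm (h.iterate s)
  have hcardS : ∀ s, s ≠ 0 → Nat.card (GaloisField p (e * s)) = p ^ (e * s) :=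
    fun s hs => GaloisField.card p _ (Nat.mul_ne_zero he0 hs)
  have hfinS : ∀ s, s ≠ 0 → Finite (GaloisField p (e * s)) := fun s hs =>
    Nat.finite_of_card_ne_zero (by rw [hcardS s hs]; exact (pow_pos (Nat.Prime.pos Fact.out) _).ne')
  let alg : Algebra (ZMod p) Ω := ZMod.algebra Ω p
  have hcount : ∀ s, s ≠ 0 → ∀ m,
      {g : MvPolynomial (Fin r) Ω | RelIrr.P g ∧
        g.totalDegree * Function.minimalPeriod (φ^[s]) g = m}.Finite ∧
      ∀ T : Finset (MvPolynomial (Fin r) Ω), (∀ g, g ∈ T ↔ RelIrr.P g ∧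
        g.totalDegree * Function.minimalPeriod (φ^[s]) g = m) →
        (Icount (GaloisField p (e * s)) r m : ℚ)
          = ∑ g ∈ T, 1 / (Function.minimalPeriod (φ^[s]) g : ℚ) := by
    intro s hs m
    have := hfinS s hs
    let ι : GaloisField p (e * s) →+* Ω :=
      (IsAlgClosed.lift : GaloisField p (e * s) →ₐ[ZMod p] Ω).toRingHom
    have hfix : ∀ x, σ s x = x ↔ x ∈ Set.range ι := fun x => by
      rw [← RelIrr.fixed_iff ι x, hcardS s hs, hσ]
    rw [← hφ]
    exact RelIrr.count ι (σ s) hfix (hper s hs) m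
  have hfix1 : ∀ x, σ 1 x = x ↔ x ∈ Set.range (algebraMap F Ω) := fun x => by
    rw [← RelIrr.fixed_iff (algebraMap F Ω) x, hcard, hσ, mul_one]
  -- the finite set of all relevant polynomials
  have hTfin : (⋃ k ∈ n.divisors, ⋃ s ∈ k.divisors, {g : MvPolynomial (Fin r) Ω | RelIrr.P g ∧
        g.totalDegree * Function.minimalPeriod (φ^[s]) g = n / k}).Finite := by
    refine Set.Finite.biUnion n.divisors.finite_toSet fun k _ => ?_
    refine Set.Finite.biUnion k.divisors.finite_toSet fun s hs => ?_
    exact (hcount s (Nat.pos_of_mem_divisors hs).ne' _).1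
  set T := hTfin.toFinset with hT
  have hTP : ∀ g ∈ T, RelIrr.P g := by
    intro g hg
    rw [hT, Set.Finite.mem_toFinset] at hg
    simp only [Set.mem_iUnion] at hg
    obtain ⟨_, _, _, _, h, _⟩ := hg
    exact h
  have hTm : ∀ k ∈ n.divisors, ∀ s ∈ k.divisors, ∀ g, RelIrr.P g →
      g.totalDegree * Function.minimalPeriod (φ^[s]) g = n / k → g ∈ T := by
    intro k hk s hs g hg h
    rw [hT, Set.Finite.mem_toFinset]
    simp only [Set.mem_iUnion]
    exact ⟨k, hk, s, hs, hg, h⟩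
  have hI : ∀ k ∈ n.divisors, ∀ s ∈ k.divisors, (Icount (GaloisField p (e * s)) r (n / k) : ℚ) =
      ∑ g ∈ T, if g.totalDegree * (Function.minimalPeriod φ g / (Function.minimalPeriod φ g).gcd s)
        = n / k then 1 / ((Function.minimalPeriod φ g / (Function.minimalPeriod φ g).gcd s : ℕ) : ℚ)
        else 0 := by
    intro k hk s hs
    have hs0 : s ≠ 0 := (Nat.pos_of_mem_divisors hs).ne'
    simp only [← Function.minimalPeriod_iterate_eq_div_gcd hs0]
    rw [← Finset.sum_filter]
    refine (hcount s hs0 (n / k)).2 _ fun g => ?_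
    rw [Finset.mem_filter]
    exact ⟨fun h => ⟨hTP g h.1, h.2⟩, fun h => ⟨hTm k hk s hs g h.1 h.2, h.2⟩⟩
  have h1n : 1 ∈ n.divisors := Nat.one_mem_divisors.2 (by omega)
  -- the number of absolutely irreducible polynomials
  have hA : (({f : MvPolynomial (Fin r) F | f.totalDegree = n ∧ MvMonic f ∧ Irreducible f ∧
      Irreducible (map (algebraMap F Ω) f)}.ncard : ℕ) : ℚ) =
      ∑ g ∈ T, if g.totalDegree = n ∧ Function.minimalPeriod φ g = 1 then (1 : ℚ) else 0 := by
    rw [RelIrr.count_abs (algebraMap F Ω) (σ 1) hfix1 (hper 1 one_ne_zero)]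
    rw [← Finset.sum_filter, Finset.sum_const, nsmul_eq_mul, mul_one, ← Set.ncard_coe_finset]
    congr 2
    ext g
    rw [Finset.mem_coe, Finset.mem_filter]
    constructor
    · rintro ⟨hg, h1, h2⟩
      refine ⟨hTm 1 h1n 1 (by simp) g hg ?_, h1, h2⟩
      rw [Function.iterate_one, Nat.div_one, h1]
      change n * Function.minimalPeriod (map (σ 1 : Ω →+* Ω)) g = n
      rw [h2, mul_one]
    · rintro ⟨hg, h1, h2⟩
      exact ⟨hTP g hg, h1, h2⟩
  have hEA : (Ecount F r n : ℚ) + (({f : MvPolynomial (Fin r) F | f.totalDegree = n ∧ MvMonic f ∧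
      Irreducible f ∧ Irreducible (map (algebraMap F Ω) f)}.ncard : ℕ) : ℚ) = Icount F r n := by
    rw [← Nat.cast_add]
    congr 1
    unfold Ecount Icount
    rw [← Set.ncard_union_eq _ ((RelIrr.finite_deg n).subset fun f hf => hf.1)
      ((RelIrr.finite_deg n).subset fun f hf => hf.1)]
    · congr 1
      ext f
      simp only [Set.mem_union, Set.mem_ofPred_eq]
      by_cases h : Irreducible (map (algebraMap F (AlgebraicClosure F)) f)
      · simp only [Ω, h]; tauto
      · simp only [Ω, h]; tauto
    · rw [Set.disjoint_left]
      rintro f ⟨_, _, _, h⟩ ⟨_, _, _, h'⟩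
      exact h h'
  have htot : ∑ k ∈ n.divisors, (1 / (k : ℚ)) *
          ∑ s ∈ k.divisors, (ArithmeticFunction.moebius s : ℚ) *
            Icount (GaloisField p (e * s)) r (n / k) =
      ∑ g ∈ T, if g.totalDegree = n ∧ Function.minimalPeriod φ g = 1 then (1 : ℚ) else 0 := by
    rw [Finset.sum_congr rfl fun k hk => congrArg _ (Finset.sum_congr rfl fun s hs =>
      congrArg _ (hI k hk s hs))]
    simp only [Finset.mul_sum]
    rw [Finset.sum_congr rfl fun k _ => Finset.sum_comm, Finset.sum_comm]
    refine Finset.sum_congr rfl fun g _ => ?_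
    rw [← RelIrr.arith n g.totalDegree (Function.minimalPeriod φ g) (by omega)
      (Function.minimalPeriod_pos_of_mem_periodicPts (hperφ g)).ne']
    simp only [Finset.mul_sum]
  have hsplit : n.divisors = insert 1 (n.divisors.filter (fun k => 1 < k)) := by
    ext k
    simp only [Finset.mem_insert, Finset.mem_filter]
    constructor
    · intro hk
      have := Nat.pos_of_mem_divisors hk
      by_cases h : k = 1
      · exact Or.inl h
      · exact Or.inr ⟨hk, by omega⟩
    · rintro (rfl | h)
      · exact h1n
      · exact h.1
  rw [hsplit, Finset.sum_insert (by simp)] at htot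
  simp only [Nat.cast_one, div_one, one_mul, Nat.divisors_one, Finset.sum_singleton,
    ArithmeticFunction.moebius_apply_one, Int.cast_one, Nat.div_one] at htot
  have hI1 : (Icount (GaloisField p (e * 1)) r n : ℚ) = Icount F r n := by rw [mul_one]
  rw [hI1, ← hA, ← hEA] at htot
  linarith
end
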